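/- (Proposition 3.1, first part) Let (D, F) be a good pair. Then the Hellinger affinity AffH(μ, ν) = ∫_Ω √(p_μ(ω)·p_ν(ω)) P(dω) is a continuous and log-concave function on M × M; that is, AffH is continuous, strictly positive, and (μ, ν) ↦ ln AffH(μ, ν) is concave on M × M. -/

import Mathlib

open MeasureTheory Real Matrix Set
open scoped ENNReal

/-- A "good pair" `(𝒟, ℱ)` in the sense of Juditsky–Nemirovski:
a parametric family of positive probability densities `p μ`, `μ ∈ M`, on `(Ω, P)`,
together with a finite-dimensional linear space `F` of Borel functions on `Ω`
containing the constants, such that log-likelihood ratios belong to `F` and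
`μ ↦ ln ∫ e^{φ} p_μ dP` is well defined (finite, witnessed by integrability)
and concave on `M` for every `φ ∈ F`. -/
structure GoodPair (Ω : Type*) [MeasurableSpace Ω] (P : Measure Ω)
    (E : Type*) [NormedAddCommGroup E] [NormedSpace ℝ E] where
  M : Set E
  p : E → Ω → ℝ
  F : Submodule ℝ (Ω → ℝ)
  M_open : IsOpen M
  M_convex : Convex ℝ M
  p_meas : ∀ μ ∈ M, Measurable (p μ)
  p_pos : ∀ μ ∈ M, ∀ ω, 0 < p μ ω
  p_prob : ∀ μ ∈ M, ∫ ω, p μ ω ∂P = 1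
  F_fd : FiniteDimensional ℝ F
  F_meas : ∀ φ ∈ F, Measurable φ
  F_const : ∀ c : ℝ, (fun _ : Ω => c) ∈ F
  logratio_mem : ∀ μ ∈ M, ∀ ν ∈ M, (fun ω => Real.log (p μ ω / p ν ω)) ∈ F
  F_finite : ∀ φ ∈ F, ∀ μ ∈ M, Integrable (fun ω => Real.exp (φ ω) * p μ ω) P
  F_concave : ∀ φ ∈ F,
    ConcaveOn ℝ M (fun μ => Real.log (∫ ω, Real.exp (φ ω) * p μ ω ∂P))

variable {Ω : Type*} [MeasurableSpace Ω] {P : Measure Ω}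
  {E : Type*} [NormedAddCommGroup E] [NormedSpace ℝ E] {n : ℕ}

/-- The distribution of the observation when the parameter is `μ`:
the measure with density `p μ` with respect to `P`. -/
noncomputable def obsMeasure (D : GoodPair Ω P E) (μ : E) : Measure Ω :=
  P.withDensity fun ω => ENNReal.ofReal (D.p μ ω)

/-- The `ε`-risk of an estimate `ghat` of the linear form `gᵀx`, `x ∈ X`:
`inf {δ | sup_{x ∈ X} Prob_{ω ∼ p_{A(x)}·P} {|ghat ω - gᵀx| > δ} < ε}`. -/
noncomputable def Risk (D : GoodPair Ω P E) (A : (Fin n → ℝ) →ᵃ[ℝ] E)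
    (g : Fin n → ℝ) (X : Set (Fin n → ℝ)) (ghat : Ω → ℝ) (ε : ℝ) : ℝ :=
  sInf {δ : ℝ |
    (⨆ x ∈ X, obsMeasure D (A x) {ω | δ < |ghat ω - g ⬝ᵥ x|}) < ENNReal.ofReal ε}

/-- The minimax optimal `ε`-risk over all (Borel) estimates. -/
noncomputable def RiskStar (D : GoodPair Ω P E) (A : (Fin n → ℝ) →ᵃ[ℝ] E)
    (g : Fin n → ℝ) (X : Set (Fin n → ℝ)) (ε : ℝ) : ℝ :=
  sInf {ρ : ℝ | ∃ ghat : Ω → ℝ, Measurable ghat ∧ ρ = Risk D A g X ghat ε}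

/-- The minimax optimal `ε`-risk over affine estimates, i.e. estimates `φ ∈ F`. -/
noncomputable def RiskAff (D : GoodPair Ω P E) (A : (Fin n → ℝ) →ᵃ[ℝ] E)
    (g : Fin n → ℝ) (X : Set (Fin n → ℝ)) (ε : ℝ) : ℝ :=
  sInf {ρ : ℝ | ∃ φ ∈ D.F, ρ = Risk D A g X φ ε}

/-- The function `Φ_r(x, y; φ, α)`. -/
noncomputable def PhiFun (D : GoodPair Ω P E) (A : (Fin n → ℝ) →ᵃ[ℝ] E)
    (g : Fin n → ℝ) (r : ℝ) (x y : Fin n → ℝ) (φ : Ω → ℝ) (α : ℝ) : ℝ :=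
  g ⬝ᵥ x - g ⬝ᵥ y
    + α * Real.log (∫ ω, Real.exp (φ ω / α) * D.p (A y) ω ∂P)
    + α * Real.log (∫ ω, Real.exp (-φ ω / α) * D.p (A x) ω ∂P)
    + 2 * α * r

/-- `Φ_*(r)` defined through the sup-inf value:
`2Φ_*(r) = sup_{x,y ∈ X} inf_{φ ∈ F, α > 0} Φ_r(x, y; φ, α)`. -/
noncomputable def PhiStarSI (D : GoodPair Ω P E) (A : (Fin n → ℝ) →ᵃ[ℝ] E)
    (g : Fin n → ℝ) (X : Set (Fin n → ℝ)) (r : ℝ) : ℝ :=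
  (1/2) * sSup {v : ℝ | ∃ x ∈ X, ∃ y ∈ X,
    v = sInf {w : ℝ | ∃ φ ∈ D.F, ∃ α : ℝ, 0 < α ∧ w = PhiFun D A g r x y φ α}}

/-- `Φ_*(r)` defined through the inf-sup value:
`2Φ_*(r) = inf_{φ ∈ F, α > 0} sup_{x,y ∈ X} Φ_r(x, y; φ, α)`. -/
noncomputable def PhiStarIS (D : GoodPair Ω P E) (A : (Fin n → ℝ) →ᵃ[ℝ] E)
    (g : Fin n → ℝ) (X : Set (Fin n → ℝ)) (r : ℝ) : ℝ :=
  (1/2) * sInf {v : ℝ | ∃ φ ∈ D.F, ∃ α : ℝ, 0 < α ∧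
    v = sSup {w : ℝ | ∃ x ∈ X, ∃ y ∈ X, w = PhiFun D A g r x y φ α}}

/-- The Hellinger affinity `AffH(μ, ν) = ∫_Ω √(p_μ p_ν) dP`. -/
noncomputable def AffH (D : GoodPair Ω P E) (μ ν : E) : ℝ :=
  ∫ ω, Real.sqrt (D.p μ ω * D.p ν ω) ∂P

/-! Substituting `f = e^φ p_μ`, `g = e^{-φ} p_ν` in the Cauchy–Schwarz inequality
`∫ √(f g) ≤ √(∫ f) √(∫ g)` leaves the left-hand side `AffH(μ, ν)` unchanged, so
`ln AffH(μ, ν) ≤ (F_φ(μ) + F_{-φ}(ν)) / 2` for every `φ ∈ F`. Equality holds at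
`φ = ½ ln(p_ν / p_μ)`, which lies in `F`. Thus `ln AffH` is the pointwise minimum over `φ ∈ F` of
functions that are jointly concave on `M × M`, hence is itself concave there; and a concave
function on an open subset of a finite-dimensional space is continuous. -/

theorem concaveOn_of_isGLB {𝕜 V β ι : Type*} [Semiring 𝕜] [PartialOrder 𝕜] [AddCommMonoid V]
    [SMul 𝕜 V] [AddCommMonoid β] [PartialOrder β] [IsOrderedAddMonoid β] [Module 𝕜 β]
    [PosSMulMono 𝕜 β] {s : Set V} {t : Set ι} {f : ι → V → β} {g : V → β} (hs : Convex 𝕜 s)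
    (hf : ∀ i ∈ t, ConcaveOn 𝕜 s (f i)) (hg : ∀ x ∈ s, IsGLB ((f · x) '' t) (g x)) :
    ConcaveOn 𝕜 s g := by
  refine ⟨hs, fun x hx y hy a b ha hb hab => (hg _ (hs hx hy ha hb hab)).2 ?_⟩
  rintro _ ⟨i, hi, rfl⟩
  calc a • g x + b • g y ≤ a • f i x + b • f i y := by
        gcongr
        · exact (hg x hx).1 (mem_image_of_mem _ hi)
        · exact (hg y hy).1 (mem_image_of_mem _ hi)
    _ ≤ f i (a • x + b • y) := (hf i hi).2 hx hy ha hb hab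

theorem continuousOn_of_concaveOn_log [FiniteDimensional ℝ E] {s : Set E} {f : E → ℝ}
    (hs : IsOpen s) (hpos : ∀ x ∈ s, 0 < f x) (hf : ConcaveOn ℝ s fun x => log (f x)) :
    ContinuousOn f s :=
  (hf.continuousOn hs).rexp.congr fun x hx => (exp_log (hpos x hx)).symm

theorem integral_pos_of_ae_pos [NeZero P] {f : Ω → ℝ} (hf : ∀ᵐ ω ∂P, 0 < f ω)
    (hfi : Integrable f P) : 0 < ∫ ω, f ω ∂P := by
  rw [integral_pos_iff_support_of_nonneg_ae (hf.mono fun _ => le_of_lt) hfi, pos_iff_ne_zero]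
  exact frequently_ae_iff.1 (hf.frequently.mono fun _ => ne_of_gt)

theorem memLp_two_sqrt {f : Ω → ℝ} (hf : 0 ≤ᵐ[P] f) (hfi : Integrable f P) :
    MemLp (fun ω => √(f ω)) 2 P := by
  rw [memLp_two_iff_integrable_sq (continuous_sqrt.comp_aestronglyMeasurable hfi.1)]
  exact hfi.congr (hf.mono fun _ h => (sq_sqrt h).symm)

theorem integral_sqrt_mul_le {f g : Ω → ℝ} (hf : 0 ≤ᵐ[P] f) (hg : 0 ≤ᵐ[P] g)
    (hfi : Integrable f P) (hgi : Integrable g P) :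
    ∫ ω, √(f ω * g ω) ∂P ≤ √(∫ ω, f ω ∂P) * √(∫ ω, g ω ∂P) := by
  have integral_rpow_sqrt {h : Ω → ℝ} (hh : 0 ≤ᵐ[P] h) :
      ∫ ω, √(h ω) ^ (2 : ℝ) ∂P = ∫ ω, h ω ∂P :=
    integral_congr_ae (hh.mono fun ω hω => by simp only [rpow_two, sq_sqrt hω])
  calc ∫ ω, √(f ω * g ω) ∂P = ∫ ω, √(f ω) * √(g ω) ∂P :=
        integral_congr_ae (hf.mono fun ω hω => sqrt_mul hω (g ω))
    _ ≤ (∫ ω, √(f ω) ^ (2 : ℝ) ∂P) ^ (1 / 2 : ℝ) * (∫ ω, √(g ω) ^ (2 : ℝ) ∂P) ^ (1 / 2 : ℝ) :=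
        integral_mul_le_Lp_mul_Lq_of_nonneg HolderConjugate.two_two
          (.of_forall fun _ => sqrt_nonneg _) (.of_forall fun _ => sqrt_nonneg _)
          (by simpa using memLp_two_sqrt hf hfi) (by simpa using memLp_two_sqrt hg hgi)
    _ = √(∫ ω, f ω ∂P) * √(∫ ω, g ω ∂P) := by
        rw [integral_rpow_sqrt hf, integral_rpow_sqrt hg, sqrt_eq_rpow, sqrt_eq_rpow]

theorem log_integral_sqrt_mul_le {f g : Ω → ℝ} (hf : 0 ≤ᵐ[P] f) (hg : 0 ≤ᵐ[P] g)
    (hfi : Integrable f P) (hgi : Integrable g P) (hpos : 0 < ∫ ω, √(f ω * g ω) ∂P) :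
    log (∫ ω, √(f ω * g ω) ∂P) ≤ (log (∫ ω, f ω ∂P) + log (∫ ω, g ω ∂P)) / 2 := by
  have hle := integral_sqrt_mul_le hf hg hfi hgi
  have hprod := hpos.trans_le hle
  calc log (∫ ω, √(f ω * g ω) ∂P)
      ≤ log (√(∫ ω, f ω ∂P) * √(∫ ω, g ω ∂P)) := log_le_log hpos hle
    _ = (log (∫ ω, f ω ∂P) + log (∫ ω, g ω ∂P)) / 2 := by
        rw [log_mul (left_ne_zero_of_mul hprod.ne') (right_ne_zero_of_mul hprod.ne'),
          log_sqrt (integral_nonneg_of_ae hf), log_sqrt (integral_nonneg_of_ae hg), add_div]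

theorem exp_half_log_div_mul {a b : ℝ} (ha : 0 < a) (hb : 0 < b) :
    exp (log (b / a) / 2) * a = √(a * b) := by
  rw [exp_half, exp_log (div_pos hb ha), sqrt_div hb.le, sqrt_mul ha.le]
  nth_rewrite 2 [← mul_self_sqrt ha.le]
  field_simp

theorem exp_mul_mul_exp_neg_mul (x a b : ℝ) : exp x * a * (exp (-x) * b) = a * b := by
  rw [mul_mul_mul_comm, ← exp_add, add_neg_cancel, exp_zero, one_mul]

namespace GoodPair

variable (D : GoodPair Ω P E) {μ ν : E} {φ : Ω → ℝ}

/-- The function `F_φ(μ) = ln ∫ e^φ p_μ dP` from condition (4) of a good pair, i.e. the logarithm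
of the moment generating function of `φ` under the distribution with density `p_μ`. -/
noncomputable def logMGF (φ : Ω → ℝ) (μ : E) : ℝ :=
  log (∫ ω, exp (φ ω) * D.p μ ω ∂P)

/-- Half the log-likelihood ratio, `½ ln(p_ν / p_μ)`: the tilt `φ` for which both `e^φ p_μ` and
`e^{-φ} p_ν` equal `√(p_μ p_ν)`. -/
noncomputable def halfLogRatio (μ ν : E) : Ω → ℝ :=
  fun ω => log (D.p ν ω / D.p μ ω) / 2

theorem halfLogRatio_mem (hμ : μ ∈ D.M) (hν : ν ∈ D.M) : D.halfLogRatio μ ν ∈ D.F := by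
  have hsmul : D.halfLogRatio μ ν = (1 / 2 : ℝ) • fun ω => log (D.p ν ω / D.p μ ω) :=
    funext fun _ => (one_div_mul_eq_div _ _).symm
  exact hsmul ▸ D.F.smul_mem _ (D.logratio_mem ν hν μ hμ)

theorem neg_halfLogRatio (μ ν : E) : -D.halfLogRatio μ ν = D.halfLogRatio ν μ := by
  ext ω
  rw [Pi.neg_apply, halfLogRatio, halfLogRatio, ← neg_div, ← log_inv, inv_div]

theorem exp_halfLogRatio_mul (hμ : μ ∈ D.M) (hν : ν ∈ D.M) (ω : Ω) :
    exp (D.halfLogRatio μ ν ω) * D.p μ ω = √(D.p μ ω * D.p ν ω) :=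
  exp_half_log_div_mul (D.p_pos μ hμ ω) (D.p_pos ν hν ω)

theorem integrable_sqrt_mul (hμ : μ ∈ D.M) (hν : ν ∈ D.M) :
    Integrable (fun ω => √(D.p μ ω * D.p ν ω)) P := by
  simpa only [D.exp_halfLogRatio_mul hμ hν] using
    D.F_finite _ (D.halfLogRatio_mem hμ hν) μ hμ

theorem measure_ne_zero (hμ : μ ∈ D.M) : P ≠ 0 := by
  rintro rfl
  simpa only [integral_zero_measure, zero_ne_one] using D.p_prob μ hμ

theorem affH_pos (hμ : μ ∈ D.M) (hν : ν ∈ D.M) : 0 < AffH D μ ν :=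
  have : NeZero P := ⟨D.measure_ne_zero hμ⟩
  integral_pos_of_ae_pos
    (.of_forall fun ω => sqrt_pos.2 (mul_pos (D.p_pos μ hμ ω) (D.p_pos ν hν ω)))
    (D.integrable_sqrt_mul hμ hν)

theorem affH_comm (μ ν : E) : AffH D μ ν = AffH D ν μ := by
  simp only [AffH, mul_comm]

theorem affH_eq_integral_sqrt_exp_mul (φ : Ω → ℝ) (μ ν : E) :
    AffH D μ ν = ∫ ω, √(exp (φ ω) * D.p μ ω * (exp ((-φ) ω) * D.p ν ω)) ∂P := by
  simp only [AffH, Pi.neg_apply, exp_mul_mul_exp_neg_mul]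

theorem log_affH_le (hφ : φ ∈ D.F) (hμ : μ ∈ D.M) (hν : ν ∈ D.M) :
    log (AffH D μ ν) ≤ (D.logMGF φ μ + D.logMGF (-φ) ν) / 2 := by
  have tilted_nonneg {ξ : E} (hξ : ξ ∈ D.M) (ψ : Ω → ℝ) : 0 ≤ᵐ[P] fun ω => exp (ψ ω) * D.p ξ ω :=
    .of_forall fun ω => mul_nonneg (exp_nonneg _) (D.p_pos ξ hξ ω).le
  have hpos := D.affH_pos hμ hν
  rw [D.affH_eq_integral_sqrt_exp_mul φ] at hpos ⊢
  exact log_integral_sqrt_mul_le (tilted_nonneg hμ φ) (tilted_nonneg hν (-φ))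
    (D.F_finite φ hφ μ hμ) (D.F_finite (-φ) (D.F.neg_mem hφ) ν hν) hpos

theorem logMGF_halfLogRatio (hμ : μ ∈ D.M) (hν : ν ∈ D.M) :
    D.logMGF (D.halfLogRatio μ ν) μ = log (AffH D μ ν) := by
  simp only [logMGF, AffH, D.exp_halfLogRatio_mul hμ hν]

theorem isLeast_log_affH (hμ : μ ∈ D.M) (hν : ν ∈ D.M) :
    IsLeast ((fun φ => (D.logMGF φ μ + D.logMGF (-φ) ν) / 2) '' D.F) (log (AffH D μ ν)) := by
  refine ⟨⟨D.halfLogRatio μ ν, D.halfLogRatio_mem hμ hν, ?_⟩, ?_⟩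
  · simp only [D.neg_halfLogRatio, D.logMGF_halfLogRatio hμ hν, D.logMGF_halfLogRatio hν hμ,
      D.affH_comm ν μ, add_self_div_two]
  · rintro _ ⟨φ, hφ, rfl⟩
    exact D.log_affH_le hφ hμ hν

theorem concaveOn_half_logMGF_add_logMGF {ψ : Ω → ℝ} (hφ : φ ∈ D.F) (hψ : ψ ∈ D.F) :
    ConcaveOn ℝ (D.M ×ˢ D.M) (fun q : E × E => (D.logMGF φ q.1 + D.logMGF ψ q.2) / 2) := by
  have hM : Convex ℝ (D.M ×ˢ D.M) := D.M_convex.prod D.M_convex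
  have hfst := ((D.F_concave φ hφ).comp_linearMap (LinearMap.fst ℝ E E)).subset
    (prod_subset_preimage_fst D.M D.M) hM
  have hsnd := ((D.F_concave ψ hψ).comp_linearMap (LinearMap.snd ℝ E E)).subset
    (prod_subset_preimage_snd D.M D.M) hM
  have hhalf := (hfst.add hsnd).smul (one_half_pos (α := ℝ)).le
  exact hhalf.congr fun _ _ => one_div_mul_eq_div _ _

theorem concaveOn_log_affH :
    ConcaveOn ℝ (D.M ×ˢ D.M) (fun q : E × E => log (AffH D q.1 q.2)) :=
  concaveOn_of_isGLB (D.M_convex.prod D.M_convex)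
    (fun _ hφ => D.concaveOn_half_logMGF_add_logMGF hφ (D.F.neg_mem hφ))
    fun _ hq => (D.isLeast_log_affH hq.1 hq.2).isGLB

end GoodPair

theorem hellinger_affinity_continuous_logConcave_general [FiniteDimensional ℝ E]
    (D : GoodPair Ω P E) :
    ContinuousOn (fun q : E × E => AffH D q.1 q.2) (D.M ×ˢ D.M)
    ∧ (∀ μ ∈ D.M, ∀ ν ∈ D.M, 0 < AffH D μ ν)
    ∧ ConcaveOn ℝ (D.M ×ˢ D.M) (fun q : E × E => log (AffH D q.1 q.2)) :=
  ⟨continuousOn_of_concaveOn_log (D.M_open.prod D.M_open) (fun _ hq => D.affH_pos hq.1 hq.2)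
      D.concaveOn_log_affH,
    fun _ hμ _ hν => D.affH_pos hμ hν, D.concaveOn_log_affH⟩

/-- **Proposition 3.1, first part.** For a good pair, the Hellinger affinity is
continuous, strictly positive, and log-concave on `M × M`. -/
theorem hellinger_affinity_continuous_logConcave
    {Ω : Type*} [MeasurableSpace Ω] [TopologicalSpace Ω] [PolishSpace Ω] [BorelSpace Ω]
    {P : Measure Ω} [SigmaFinite P] {m : ℕ}
    (D : GoodPair Ω P (Fin m → ℝ)) :
    ContinuousOn (fun q : (Fin m → ℝ) × (Fin m → ℝ) => AffH D q.1 q.2) (D.M ×ˢ D.M)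
    ∧ (∀ μ ∈ D.M, ∀ ν ∈ D.M, 0 < AffH D μ ν)
    ∧ ConcaveOn ℝ (D.M ×ˢ D.M)
        (fun q : (Fin m → ℝ) × (Fin m → ℝ) => Real.log (AffH D q.1 q.2)) :=
  hellinger_affinity_continuous_logConcave_general D
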